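/- arXiv:1704.08481 — 4 statements merged into one kernel-verified Lean document; each statement's English description precedes it below -/
import Mathlib

section
/- Let φ be an outmap on the standard n-cube (n ≥ 2) that is a PUSO of the full face [∅,{1,…,n}]. Then the number of sinks of the full face under φ, i.e. the number of vertices V ⊆ {1,…,n} with φ(V) ∩ {1,…,n} = ∅, is either 0 or exactly 2. -/
/-! Two vertices that agree in some coordinate lie in a common facet, and a sink of a face is a
sink of every subface containing it. A facet of a PUSO has only one sink, so distinct sinks of a
PUSO differ in every coordinate of the carrier. A vertex has a single antipode, so there are at
most two sinks; exactly one sink is excluded by definition. -/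

open Finset
open scoped symmDiff

/-- `V` is a sink of the face `[A,B]` of the standard cube (vertices are subsets
of `{1,…,n}`) under the outmap `φ`: `V` belongs to the face and `φ V` has no
coordinate in the carrier `B \ A`. -/
def IsSink (φ : Finset ℕ → Finset ℕ) (A B V : Finset ℕ) : Prop :=
  A ⊆ V ∧ V ⊆ B ∧ φ V ∩ (B \ A) = ∅

/-- The face `[A,B]` has exactly one sink under `φ`. -/
def HasUniqueSink (φ : Finset ℕ → Finset ℕ) (A B : Finset ℕ) : Prop :=
  ∃! V, IsSink φ A B V

/-- `φ` is a USO of the face `[A,B]`: every face contained in `[A,B]`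
(including `[A,B]` itself) has exactly one sink under `φ`. -/
def IsUSO (φ : Finset ℕ → Finset ℕ) (A B : Finset ℕ) : Prop :=
  A ⊆ B ∧ ∀ A' B' : Finset ℕ, A ⊆ A' → A' ⊆ B' → B' ⊆ B → HasUniqueSink φ A' B'

/-- `φ` is a PUSO of the face `[A,B]`: `[A,B]` does not have exactly one sink
under `φ`, but every proper face contained in `[A,B]` has exactly one sink. -/
def IsPUSO (φ : Finset ℕ → Finset ℕ) (A B : Finset ℕ) : Prop :=
  A ⊆ B ∧ ¬ HasUniqueSink φ A B ∧
    ∀ A' B' : Finset ℕ, A ⊆ A' → A' ⊆ B' → B' ⊆ B → ¬(A' = A ∧ B' = B) →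
      HasUniqueSink φ A' B'

section

variable {φ : Finset ℕ → Finset ℕ} {A B V W : Finset ℕ}

theorem IsSink.restrict {A' B' : Finset ℕ} (hV : IsSink φ A B V)
    (hA : A ⊆ A') (hA'V : A' ⊆ V) (hVB' : V ⊆ B') (hB : B' ⊆ B) : IsSink φ A' B' V :=
  ⟨hA'V, hVB', subset_empty.mp <|
    (inter_subset_inter_left (sdiff_subset_sdiff hB hA)).trans hV.2.2.subset⟩

theorem IsPUSO.eq_of_isSink_of_mem (h : IsPUSO φ A B) (hV : IsSink φ A B V)
    (hW : IsSink φ A B W) {i : ℕ} (hiA : i ∉ A) (hiV : i ∈ V) (hiW : i ∈ W) : V = W := by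
  have hV' : insert i A ⊆ V := insert_subset hiV hV.1
  have hW' : insert i A ⊆ W := insert_subset hiW hW.1
  have hunique : HasUniqueSink φ (insert i A) B :=
    h.2.2 _ _ (subset_insert i A) (hV'.trans hV.2.1) Subset.rfl fun hfull =>
      hiA (insert_eq_self.mp hfull.1)
  exact hunique.unique (hV.restrict (subset_insert i A) hV' hV.2.1 Subset.rfl)
    (hW.restrict (subset_insert i A) hW' hW.2.1 Subset.rfl)

theorem IsPUSO.eq_of_isSink_of_notMem (h : IsPUSO φ A B) (hV : IsSink φ A B V)
    (hW : IsSink φ A B W) {i : ℕ} (hiB : i ∈ B) (hiV : i ∉ V) (hiW : i ∉ W) : V = W := by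
  have hV' : V ⊆ B.erase i := subset_erase.mpr ⟨hV.2.1, hiV⟩
  have hW' : W ⊆ B.erase i := subset_erase.mpr ⟨hW.2.1, hiW⟩
  have hunique : HasUniqueSink φ A (B.erase i) :=
    h.2.2 _ _ Subset.rfl (hV.1.trans hV') (erase_subset i B) fun hfull =>
      erase_eq_self.mp hfull.2 hiB
  exact hunique.unique (hV.restrict Subset.rfl hV.1 hV' (erase_subset i B))
    (hW.restrict Subset.rfl hW.1 hW' (erase_subset i B))

theorem IsPUSO.symmDiff_eq_of_isSink_of_ne (h : IsPUSO φ A B) (hV : IsSink φ A B V)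
    (hW : IsSink φ A B W) (hne : V ≠ W) : V ∆ W = B \ A := by
  have hsubset : V ∆ W ⊆ B \ A :=
    union_subset (sdiff_subset_sdiff hV.2.1 hW.1) (sdiff_subset_sdiff hW.2.1 hV.1)
  refine hsubset.antisymm fun i hi => ?_
  obtain ⟨hiB, hiA⟩ := mem_sdiff.mp hi
  rw [mem_symmDiff]
  by_cases hiV : i ∈ V
  · exact .inl ⟨hiV, fun hiW => hne (h.eq_of_isSink_of_mem hV hW hiA hiV hiW)⟩
  · exact .inr ⟨not_imp_comm.mp (fun hiW => h.eq_of_isSink_of_notMem hV hW hiB hiV hiW) hne, hiV⟩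

/-- The set of sinks of the face `[A,B]` under `φ`, as a `Finset` so that sinks can be counted;
the face itself is the order interval `Finset.Icc A B` for inclusion. -/
def sinks (φ : Finset ℕ → Finset ℕ) (A B : Finset ℕ) : Finset (Finset ℕ) :=
  {V ∈ Icc A B | φ V ∩ (B \ A) = ∅}

theorem mem_sinks : V ∈ sinks φ A B ↔ IsSink φ A B V := by
  simp only [sinks, mem_filter, mem_Icc, IsSink, and_assoc]

theorem card_sinks_eq_one_iff : #(sinks φ A B) = 1 ↔ HasUniqueSink φ A B := by
  simp only [card_eq_one, singleton_iff_unique_mem, mem_sinks, HasUniqueSink]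

theorem IsPUSO.card_sinks_le_two (h : IsPUSO φ A B) : #(sinks φ A B) ≤ 2 := by
  by_contra! hcard
  obtain ⟨U, hU, V, hV, W, hW, hUV, hUW, hVW⟩ := two_lt_card.mp hcard
  rw [mem_sinks] at hU hV hW
  have hantipode : U ∆ V = U ∆ W :=
    (h.symmDiff_eq_of_isSink_of_ne hU hV hUV).trans (h.symmDiff_eq_of_isSink_of_ne hU hW hUW).symm
  exact hVW (symmDiff_right_injective U hantipode)

theorem sinks_empty_left (φ : Finset ℕ → Finset ℕ) (B : Finset ℕ) :
    sinks φ ∅ B = {V ∈ B.powerset | φ V ∩ B = ∅} := by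
  ext V
  simp only [mem_sinks, IsSink, empty_subset, true_and, sdiff_empty, mem_filter, mem_powerset]

theorem puso_zero_or_two_sinks_general (h : IsPUSO φ A B) :
    #(sinks φ A B) = 0 ∨ #(sinks φ A B) = 2 := by
  have hne_one : #(sinks φ A B) ≠ 1 := fun hone => h.2.1 (card_sinks_eq_one_iff.mp hone)
  have hle_two : #(sinks φ A B) ≤ 2 := h.card_sinks_le_two
  omega

end

/-- A PUSO of the full face of the standard `n`-cube (`n ≥ 2`) has either no
sink or exactly two sinks. -/
theorem puso_zero_or_two_sinks (n : ℕ) (hn : 2 ≤ n)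
    (φ : Finset ℕ → Finset ℕ) (hφ : IsPUSO φ ∅ (Finset.Icc 1 n)) :
    ((Finset.Icc 1 n).powerset.filter
        (fun V => φ V ∩ Finset.Icc 1 n = ∅)).card = 0 ∨
    ((Finset.Icc 1 n).powerset.filter
        (fun V => φ V ∩ Finset.Icc 1 n = ∅)).card = 2 := by
  simpa only [sinks_empty_left] using puso_zero_or_two_sinks_general hφ
end

section
/- Let n ≥ 2 and let π be a permutation of {1,…,n} consisting of a single n-cycle (a cyclic permutation whose cycle has length n). Define the outmap φ by φ(V) = { i ∈ {1,…,n} : |V ∩ {i, π(i)}| = 1 } for all V ⊆ {1,…,n}. Then φ is a PUSO of the full face [∅,{1,…,n}] of the standard n-cube. -/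
/-!
Since `π` has no fixed point on the cycle, `i ∈ φ V` says that exactly one of `i`, `π i` lies in
`V`, so `φ` is linear over `𝔽₂`: `φ (U ∆ V) = φ U ∆ φ V`. For a linear outmap, finding the sinks of
a face with carrier `C` amounts to solving a linear system given by the endomorphism
`W ↦ φ W ∩ C` of the finite space of subsets of `C`; the sink is unique iff this endomorphism has
trivial kernel. A nonempty `W ⊆ C` lies in the kernel only if `π` maps `W` into itself, which
forces `W` to be the whole cycle. Hence the kernel is trivial on every proper face, while the full
cycle itself is a nonzero kernel element on the full face.
-/

open Finset
open scoped symmDiff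

theorem existsUnique_eq_of_map_symmDiff {α : Type*} [DecidableEq α]
    {ψ : Finset α → Finset α} {C T : Finset α} (hψ : ∀ U V, ψ (U ∆ V) = ψ U ∆ ψ V)
    (hmaps : ∀ W ⊆ C, ψ W ⊆ C) (hker : ∀ W ⊆ C, ψ W = ∅ → W = ∅) (hT : T ⊆ C) :
    ∃! W, W ⊆ C ∧ ψ W = T := by
  have hinj : Set.InjOn ψ {W | W ⊆ C} := fun U hU V hV hUV =>
    symmDiff_eq_bot.1 <| hker _ (symmDiff_le_sup.trans (union_subset hU hV)) <|
      (hψ U V).trans (symmDiff_eq_bot.2 hUV)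
  have hsurj : Set.SurjOn ψ {W | W ⊆ C} {W | W ⊆ C} := by
    simp only [← mem_powerset, setOfPred_mem] at hinj ⊢
    exact surjOn_of_injOn_of_card_le ψ (by simpa [Set.MapsTo] using hmaps) hinj le_rfl
  obtain ⟨W, hW, hWT⟩ := hsurj hT
  exact ⟨W, ⟨hW, hWT⟩, fun U ⟨hU, hUT⟩ => hinj hU hW (hUT.trans hWT.symm)⟩

theorem map_symmDiff_inter {α : Type*} [DecidableEq α] {φ : Finset α → Finset α}
    (hφ : ∀ U V, φ (U ∆ V) = φ U ∆ φ V) (C U V : Finset α) :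
    φ (U ∆ V) ∩ C = (φ U ∩ C) ∆ (φ V ∩ C) := by
  rw [hφ]
  exact inf_symmDiff_distrib_right _ _ _

section LinearOutmap

variable {φ : Finset ℕ → Finset ℕ} {A B : Finset ℕ}

theorem isSink_symmDiff_iff (hφ : ∀ U V, φ (U ∆ V) = φ U ∆ φ V) (hAB : A ⊆ B) {W : Finset ℕ} :
    IsSink φ A B (A ∆ W) ↔ W ⊆ B \ A ∧ φ W ∩ (B \ A) = φ A ∩ (B \ A) := by
  have hface : A ⊆ A ∆ W ∧ A ∆ W ⊆ B ↔ W ⊆ B \ A := by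
    simp only [subset_iff, mem_symmDiff, mem_sdiff] at hAB ⊢
    grind
  have hsink : φ (A ∆ W) ∩ (B \ A) = ∅ ↔ φ W ∩ (B \ A) = φ A ∩ (B \ A) := by
    rw [map_symmDiff_inter hφ]
    exact symmDiff_eq_bot.trans eq_comm
  rw [IsSink, ← and_assoc, hface, hsink]

theorem hasUniqueSink_iff_of_map_symmDiff (hφ : ∀ U V, φ (U ∆ V) = φ U ∆ φ V) (hAB : A ⊆ B) :
    HasUniqueSink φ A B ↔ ∀ W ⊆ B \ A, φ W ∩ (B \ A) = ∅ → W = ∅ := by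
  have htranslate : HasUniqueSink φ A B ↔
      ∃! W, W ⊆ B \ A ∧ φ W ∩ (B \ A) = φ A ∩ (B \ A) := by
    simp only [← isSink_symmDiff_iff hφ hAB]
    exact (symmDiff_right_involutive A).bijective.existsUnique_iff
  refine htranslate.trans ⟨?_, fun hker => existsUnique_eq_of_map_symmDiff
    (map_symmDiff_inter hφ (B \ A)) (fun _ _ => inter_subset_right) hker inter_subset_right⟩
  rintro ⟨U, ⟨hU, hUA⟩, huniq⟩ W hW hφW
  have hUW : φ (U ∆ W) ∩ (B \ A) = φ A ∩ (B \ A) := by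
    rw [map_symmDiff_inter hφ, hφW, hUA]
    exact symmDiff_bot _
  exact symmDiff_eq_left.1 (huniq _ ⟨symmDiff_le_sup.trans (union_subset hU hW), hUW⟩)

end LinearOutmap

theorem card_inter_pair_eq_one_iff {α : Type*} [DecidableEq α] {V : Finset α} {a b : α}
    (hab : a ≠ b) : #(V ∩ {a, b}) = 1 ↔ ¬(a ∈ V ↔ b ∈ V) := by
  by_cases ha : a ∈ V <;> by_cases hb : b ∈ V <;>
    simp [inter_insert_of_mem, inter_insert_of_notMem, ha, hb, hab]

/-- The outmap of the theorem for an arbitrary map `f` in place of the cycle and an arbitrary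
finite coordinate set `s`: when `f` has no fixed point in `s`, it records the edges `{i, f i}`
with `i ∈ s` that are cut by `V`. -/
def cutOutmap (f : ℕ → ℕ) (s V : Finset ℕ) : Finset ℕ :=
  s.filter fun i => #(V ∩ {i, f i}) = 1

section CutOutmap

variable {f : ℕ → ℕ} {s : Finset ℕ}

theorem mem_cutOutmap (hf : ∀ i ∈ s, f i ≠ i) {V : Finset ℕ} {i : ℕ} :
    i ∈ cutOutmap f s V ↔ i ∈ s ∧ ¬(i ∈ V ↔ f i ∈ V) := by
  rw [cutOutmap, mem_filter]
  exact and_congr_right fun hi => card_inter_pair_eq_one_iff (hf i hi).symm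

theorem cutOutmap_symmDiff (hf : ∀ i ∈ s, f i ≠ i) (U V : Finset ℕ) :
    cutOutmap f s (U ∆ V) = cutOutmap f s U ∆ cutOutmap f s V := by
  ext i
  simp only [mem_symmDiff, mem_cutOutmap hf]
  tauto

theorem cutOutmap_inter_eq_empty_iff (hf : ∀ i ∈ s, f i ≠ i) {C W : Finset ℕ} (hC : C ⊆ s) :
    cutOutmap f s W ∩ C = ∅ ↔ ∀ i ∈ C, (i ∈ W ↔ f i ∈ W) := by
  simp only [← disjoint_iff_inter_eq_empty, disjoint_right, mem_cutOutmap hf, not_and, not_not]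
  exact forall₂_congr fun i hi => forall_prop_of_true (hC hi)

end CutOutmap

theorem eq_of_isCycleOn_of_mapsTo {α : Type*} {π : Equiv.Perm α} {s W : Finset α}
    (hπ : π.IsCycleOn s) (hWs : W ⊆ s) (hW : W.Nonempty) (hmaps : Set.MapsTo π W W) : W = s := by
  obtain ⟨i, hi⟩ := hW
  refine hWs.antisymm fun j hj => ?_
  obtain ⟨k, -, rfl⟩ := hπ.exists_pow_eq (hWs hi) hj
  rw [Equiv.Perm.coe_pow]
  exact hmaps.iterate k hi

theorem hasUniqueSink_cutOutmap_iff {π : Equiv.Perm ℕ} {s A B : Finset ℕ}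
    (hπ : π.IsCycleOn s) (hs : s.Nontrivial) (hAB : A ⊆ B) (hC : B \ A ⊆ s) :
    HasUniqueSink (cutOutmap π s) A B ↔ B \ A ≠ s := by
  have hfix : ∀ i ∈ s, π i ≠ i := fun i hi => hπ.apply_ne hs hi
  rw [hasUniqueSink_iff_of_map_symmDiff (cutOutmap_symmDiff hfix) hAB]
  simp only [cutOutmap_inter_eq_empty_iff hfix hC]
  constructor
  · rintro hker rfl
    exact hs.nonempty.ne_empty
      (hker _ Subset.rfl fun i hi => iff_of_true hi (hπ.apply_mem_iff.2 hi))
  · intro hne W hW hconst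
    by_contra hW0
    have hWs : W = s := eq_of_isCycleOn_of_mapsTo hπ (hW.trans hC)
      (nonempty_iff_ne_empty.2 hW0) fun i hi => (hconst i (hW hi)).1 hi
    exact hne (hC.antisymm (hWs ▸ hW))

theorem puso_existence_general {π : Equiv.Perm ℕ} {s : Finset ℕ} (hπ : π.IsCycleOn s)
    (hs : s.Nontrivial) : IsPUSO (fun V => s.filter fun i => #(V ∩ {i, π i}) = 1) ∅ s := by
  change IsPUSO (cutOutmap π s) ∅ s
  refine ⟨empty_subset s, ?_, fun A B _ hAB hBs hproper => ?_⟩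
  · simp [hasUniqueSink_cutOutmap_iff hπ hs]
  · refine (hasUniqueSink_cutOutmap_iff hπ hs hAB (sdiff_subset.trans hBs)).2 fun hC => hproper ?_
    have hB : B = s := hBs.antisymm (hC ▸ sdiff_subset)
    have hdisj : Disjoint B A := sdiff_eq_self_iff_disjoint.1 (hC.trans hB.symm)
    exact ⟨disjoint_self_iff_empty A |>.1 (hdisj.mono_left hAB), hB⟩

/-- PUSO existence: if `π` is a permutation of `{1,…,n}` consisting of a single
`n`-cycle (it is a cycle, and it moves exactly the elements of `{1,…,n}`), then
`φ(V) = {i ∈ {1,…,n} : |V ∩ {i, π i}| = 1}` defines a PUSO of the full face of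
the standard `n`-cube. -/
theorem puso_existence (n : ℕ) (hn : 2 ≤ n) (π : Equiv.Perm ℕ)
    (hcyc : π.IsCycle) (hmoves : ∀ i : ℕ, π i ≠ i ↔ i ∈ Finset.Icc 1 n) :
    IsPUSO (fun V => (Finset.Icc 1 n).filter (fun i => (V ∩ {i, π i}).card = 1))
      ∅ (Finset.Icc 1 n) := by
  have hsupp : {i | π i ≠ i} = (Finset.Icc 1 n : Set ℕ) := Set.ext hmoves
  have hnontrivial : (Finset.Icc 1 n).Nontrivial :=
    one_lt_card_iff_nontrivial.1 (by rw [Nat.card_Icc]; omega)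
  exact puso_existence_general (hsupp ▸ hcyc.isCycleOn) hnontrivial
end

section
/- Let n ≥ 2 and let ψ be an outmap that is a USO of the full face [∅,{1,…,n−1}] of the standard (n−1)-cube. For i ∈ {0,1} define the outmap φ_i on the standard n-cube by: for V ⊆ {1,…,n−1}, φ_i(V) = ψ(V) if |ψ(V)| ≡ i (mod 2) and φ_i(V) = ψ(V) ∪ {n} otherwise; and for V with n ∈ V, φ_i(V) = φ_i({1,…,n} \ V). Then the following are equivalent: (a) ψ is a border USO; (b) φ_0 is a PUSO of the full face [∅,{1,…,n}]; (c) φ_1 is a PUSO of the full face [∅,{1,…,n}]. -/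
open Finset
open scoped symmDiff

/-- `ψ` is a border USO of the full face of the standard `n`-cube: it is a USO
and there is an outmap `φ` on the standard `(n+1)`-cube that is a PUSO of the
full face and whose restriction to the facet `[∅, {1,…,n}]` agrees with `ψ`. -/
def IsBorderUSO (n : ℕ) (ψ : Finset ℕ → Finset ℕ) : Prop :=
  IsUSO ψ ∅ (Finset.Icc 1 n) ∧
    ∃ φ : Finset ℕ → Finset ℕ, IsPUSO φ ∅ (Finset.Icc 1 (n + 1)) ∧
      ∀ V : Finset ℕ, V ⊆ Finset.Icc 1 n → φ V ∩ Finset.Icc 1 n = ψ V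

/-- Auxiliary map for extending an outmap `ψ` of the `(n-1)`-cube to the
`n`-cube: keep `ψ V` if `|ψ V|` has parity `i`, otherwise add coordinate `n`. -/
def phiExtAux (n i : ℕ) (ψ : Finset ℕ → Finset ℕ) (V : Finset ℕ) : Finset ℕ :=
  if (ψ V).card % 2 = i % 2 then ψ V else ψ V ∪ {n}

/-- The two candidate extensions `φ_i` (i = 0, 1) of a USO `ψ` of the facet
`[∅,{1,…,n-1}]` to the standard `n`-cube: on the facet use `phiExtAux`, and for
vertices containing `n` copy the value of the antipodal vertex. -/
def phiExt (n i : ℕ) (ψ : Finset ℕ → Finset ℕ) (V : Finset ℕ) : Finset ℕ :=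
  if n ∈ V then phiExtAux n i ψ (Finset.Icc 1 n \ V) else phiExtAux n i ψ V

/-!
Let `i` be a direction of a face both of whose `i`-facets have a unique sink. The sinks of the face
are those of these two vertices whose outmap value omits `i`, so the face has a unique sink iff
exactly one of the two values contains `i`. This condition survives reversing all edges in direction
`i`. Hence PUSOs are stable under reversing any set `U` of directions, which turns the vertices with
outmap value `U` into sinks: what holds for sinks of PUSOs holds for arbitrary outmap values.

In a PUSO the two values agree at `i`, so reversing `i` creates sinks if there were none and
destroys them otherwise. Thus all outmap values of a PUSO have the same parity. Moreover two
distinct sinks never share a facet, so sinks, and therefore equal outmap values, come in antipodal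
pairs.

Consequently a PUSO is determined by its restriction `ψ` to a facet and its parity `p`: it is `φ_p`.
Reversing coordinate `n` gives a PUSO with the same restriction and the other parity.
-/

lemma existsUnique_eq_or_eq_and_iff_xor {α : Type*} {a b : α} (hab : a ≠ b) (p : α → Prop) :
    (∃! x, (x = a ∨ x = b) ∧ p x) ↔ Xor (p a) (p b) := by
  constructor
  · rintro ⟨x, ⟨rfl | rfl, hx⟩, hunique⟩
    · exact .inl ⟨hx, fun hb ↦ hab (hunique b ⟨.inr rfl, hb⟩).symm⟩
    · exact .inr ⟨hx, fun ha ↦ hab (hunique a ⟨.inl rfl, ha⟩)⟩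
  · rintro (⟨ha, hb⟩ | ⟨hb, ha⟩)
    · exact ⟨a, ⟨.inl rfl, ha⟩, by grind⟩
    · exact ⟨b, ⟨.inr rfl, hb⟩, by grind⟩

section Outmap

variable {φ φ' : Finset ℕ → Finset ℕ} {A B V W : Finset ℕ} {i : ℕ}

lemma isSink_iff_forall_notMem :
    IsSink φ A B V ↔ A ⊆ V ∧ V ⊆ B ∧ ∀ x ∈ B \ A, x ∉ φ V := by
  rw [IsSink, ← Finset.disjoint_iff_inter_eq_empty, Finset.disjoint_right]

lemma HasUniqueSink.congr (h : HasUniqueSink φ A B)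
    (hφ : ∀ V, A ⊆ V → V ⊆ B → φ V ∩ (B \ A) = φ' V ∩ (B \ A)) : HasUniqueSink φ' A B := by
  have hsink : ∀ V, IsSink φ A B V ↔ IsSink φ' A B V := fun V ↦
    and_congr_right fun hAV ↦ and_congr_right fun hVB ↦ by rw [hφ V hAV hVB]
  simpa only [HasUniqueSink, hsink] using h

lemma inter_sdiff_eq_of_subface {S T A' B' : Finset ℕ} (hA : A ⊆ A') (hB : B' ⊆ B)
    (h : S ∩ (B \ A) = T ∩ (B \ A)) : S ∩ (B' \ A') = T ∩ (B' \ A') := by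
  rw [← Finset.inter_eq_right.2 (Finset.sdiff_subset_sdiff hB hA), ← Finset.inter_assoc, h,
    Finset.inter_assoc]

lemma IsUSO.congr (h : IsUSO φ A B)
    (hφ : ∀ V, A ⊆ V → V ⊆ B → φ V ∩ (B \ A) = φ' V ∩ (B \ A)) : IsUSO φ' A B :=
  ⟨h.1, fun A' B' hA hAB hB ↦ (h.2 A' B' hA hAB hB).congr fun V hAV hVB ↦
    inter_sdiff_eq_of_subface hA hB (hφ V (hA.trans hAV) (hVB.trans hB))⟩

lemma IsPUSO.congr (h : IsPUSO φ A B)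
    (hφ : ∀ V, A ⊆ V → V ⊆ B → φ V ∩ (B \ A) = φ' V ∩ (B \ A)) : IsPUSO φ' A B :=
  ⟨h.1, fun h' ↦ h.2.1 (h'.congr fun V hAV hVB ↦ (hφ V hAV hVB).symm),
    fun A' B' hA hAB hB hne ↦ (h.2.2 A' B' hA hAB hB hne).congr fun V hAV hVB ↦
      inter_sdiff_eq_of_subface hA hB (hφ V (hA.trans hAV) (hVB.trans hB))⟩

lemma IsPUSO.isUSO_of_ne {A' B' : Finset ℕ} (h : IsPUSO φ A B) (hA : A ⊆ A') (hAB : A' ⊆ B')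
    (hB : B' ⊆ B) (hne : ¬(A' = A ∧ B' = B)) : IsUSO φ A' B' := by
  refine ⟨hAB, fun A'' B'' hA' hAB' hB' ↦
    h.2.2 A'' B'' (hA.trans hA') hAB' (hB'.trans hB) fun ⟨hAA, hBB⟩ ↦ hne ⟨?_, ?_⟩⟩
  · exact (hAA ▸ hA').antisymm hA
  · exact hB.antisymm (hBB ▸ hB')

lemma IsPUSO.hasUniqueSink_lowerFacet (h : IsPUSO φ A B) (hi : i ∈ B \ A) :
    HasUniqueSink φ A (B.erase i) := by
  have := h.1
  apply h.2.2 <;> grind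

lemma IsPUSO.hasUniqueSink_upperFacet (h : IsPUSO φ A B) (hi : i ∈ B \ A) :
    HasUniqueSink φ (insert i A) B := by
  have := h.1
  apply h.2.2 <;> grind

/-- The outmap obtained from `φ` by reversing all edges in the directions of `U`. It turns the
vertices at which `φ` has the value `U` into sinks. -/
def reorient (φ : Finset ℕ → Finset ℕ) (U V : Finset ℕ) : Finset ℕ :=
  φ V ∆ U

lemma reorient_empty : reorient φ ∅ = φ :=
  funext fun V ↦ symmDiff_bot (φ V)

lemma reorient_insert {U : Finset ℕ} (hi : i ∉ U) :
    reorient φ (insert i U) = reorient (reorient φ U) {i} := by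
  have hU : insert i U = U ∆ {i} := by grind [Finset.mem_symmDiff]
  funext V
  simp only [reorient, hU, symmDiff_assoc]

lemma reorient_inter_of_disjoint {U C : Finset ℕ} (h : Disjoint U C) :
    reorient φ U V ∩ C = φ V ∩ C := by
  have := Finset.disjoint_left.1 h
  grind [reorient, Finset.mem_symmDiff]

lemma isSink_reorient_iff {U : Finset ℕ} :
    IsSink (reorient φ U) A B V ↔ A ⊆ V ∧ V ⊆ B ∧ φ V ∩ (B \ A) = U ∩ (B \ A) := by
  rw [IsSink, reorient, ← Finset.inf_eq_inter, inf_symmDiff_distrib_right]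
  exact and_congr_right' (and_congr_right' symmDiff_eq_bot)

lemma isSink_iff_isSink_facet (hi : i ∈ B \ A) :
    IsSink φ A B V ↔
      (IsSink φ A (B.erase i) V ∨ IsSink φ (insert i A) B V) ∧ i ∉ φ V := by
  simp only [isSink_iff_forall_notMem]
  by_cases hiV : i ∈ V <;> grind

lemma isSink_reorient_singleton_iff_of_notMem (hi : i ∉ B \ A) :
    IsSink (reorient φ {i}) A B V ↔ IsSink φ A B V := by
  rw [IsSink, IsSink, reorient_inter_of_disjoint (Finset.disjoint_singleton_left.2 hi)]

lemma exists_isSink_iff_of_facets (hi : i ∈ B \ A) (hlower : HasUniqueSink φ A (B.erase i))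
    (hupper : HasUniqueSink φ (insert i A) B) :
    ∃ S T, i ∉ S ∧ i ∈ T ∧ (∀ V, IsSink φ A B V ↔ (V = S ∨ V = T) ∧ i ∉ φ V) ∧
      ∀ V, IsSink (reorient φ {i}) A B V ↔ (V = S ∨ V = T) ∧ i ∈ φ V := by
  obtain ⟨S, hS, hS_unique⟩ := hlower
  obtain ⟨T, hT, hT_unique⟩ := hupper
  have lower_iff : ∀ V, IsSink φ A (B.erase i) V ↔ V = S :=
    fun V ↦ ⟨hS_unique V, fun hV ↦ hV ▸ hS⟩
  have upper_iff : ∀ V, IsSink φ (insert i A) B V ↔ V = T :=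
    fun V ↦ ⟨hT_unique V, fun hV ↦ hV ▸ hT⟩
  refine ⟨S, T, fun hiS ↦ Finset.notMem_erase i B (hS.2.1 hiS),
    hT.1 (Finset.mem_insert_self i A), fun V ↦ ?_, fun V ↦ ?_⟩
  · rw [isSink_iff_isSink_facet hi, lower_iff, upper_iff]
  · rw [isSink_iff_isSink_facet hi, isSink_reorient_singleton_iff_of_notMem (by simp),
      isSink_reorient_singleton_iff_of_notMem (by simp), lower_iff, upper_iff]
    simp [reorient, Finset.mem_symmDiff]

lemma hasUniqueSink_reorient_singleton_iff (hi : i ∈ B \ A)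
    (hlower : HasUniqueSink φ A (B.erase i)) (hupper : HasUniqueSink φ (insert i A) B) :
    HasUniqueSink (reorient φ {i}) A B ↔ HasUniqueSink φ A B := by
  obtain ⟨S, T, hiS, hiT, sink_iff, reorient_sink_iff⟩ :=
    exists_isSink_iff_of_facets hi hlower hupper
  have hST : S ≠ T := ne_of_mem_of_not_mem' hiT hiS |>.symm
  simp only [HasUniqueSink, sink_iff, reorient_sink_iff, existsUnique_eq_or_eq_and_iff_xor hST,
    xor_not_not]

namespace IsPUSO

lemma reorient_singleton (h : IsPUSO φ A B) (i : ℕ) : IsPUSO (reorient φ {i}) A B := by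
  have unique_iff : ∀ A' B', A ⊆ A' → A' ⊆ B' → B' ⊆ B →
      (HasUniqueSink (reorient φ {i}) A' B' ↔ HasUniqueSink φ A' B') := by
    intro A' B' hA hAB hB
    by_cases hi : i ∈ B' \ A'
    · apply hasUniqueSink_reorient_singleton_iff hi <;> apply h.2.2 <;> grind
    · simp only [HasUniqueSink, isSink_reorient_singleton_iff_of_notMem hi]
  exact ⟨h.1, mt (unique_iff A B subset_rfl h.1 subset_rfl).1 h.2.1,
    fun A' B' hA hAB hB hne ↦ (unique_iff A' B' hA hAB hB).2 (h.2.2 A' B' hA hAB hB hne)⟩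

protected lemma reorient (h : IsPUSO φ A B) (U : Finset ℕ) : IsPUSO (reorient φ U) A B := by
  induction U using Finset.induction_on with
  | empty => rwa [reorient_empty]
  | insert i U hi ih => exact reorient_insert hi ▸ ih.reorient_singleton i

lemma exists_isSink_reorient_singleton_iff (h : IsPUSO φ A B) (hi : i ∈ B \ A) :
    (∃ V, IsSink (reorient φ {i}) A B V) ↔ ¬∃ V, IsSink φ A B V := by
  obtain ⟨S, T, hiS, hiT, sink_iff, reorient_sink_iff⟩ :=
    exists_isSink_iff_of_facets hi (h.hasUniqueSink_lowerFacet hi) (h.hasUniqueSink_upperFacet hi)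
  have hST : S ≠ T := ne_of_mem_of_not_mem' hiT hiS |>.symm
  have same_value : i ∈ φ S ↔ i ∈ φ T := by
    have := h.2.1
    simp only [HasUniqueSink, sink_iff, existsUnique_eq_or_eq_and_iff_xor hST] at this
    rwa [xor_not_not, not_xor] at this
  simp only [sink_iff, reorient_sink_iff, or_and_right, exists_or, exists_eq_left, same_value,
    or_self, not_not]

lemma exists_isSink_reorient_iff (h : IsPUSO φ A B) {U : Finset ℕ} (hU : U ⊆ B \ A) :
    (∃ V, IsSink (reorient φ U) A B V) ↔ (Even #U ↔ ∃ V, IsSink φ A B V) := by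
  induction U using Finset.induction_on with
  | empty => simp [reorient_empty]
  | insert i U hi ih =>
    obtain ⟨hiBA, hUBA⟩ := Finset.insert_subset_iff.1 hU
    rw [reorient_insert hi, (h.reorient U).exists_isSink_reorient_singleton_iff hiBA, ih hUBA,
      Finset.card_insert_of_notMem hi, Nat.even_add_one]
    tauto

lemma even_card_inter_iff (h : IsPUSO φ A B) (hAV : A ⊆ V) (hVB : V ⊆ B) :
    Even #(φ V ∩ (B \ A)) ↔ ∃ W, IsSink φ A B W := by
  refine (h.exists_isSink_reorient_iff Finset.inter_subset_right).1 ⟨V, ?_⟩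
  exact isSink_reorient_iff.2 ⟨hAV, hVB, by rw [Finset.inter_right_idem]⟩

lemma eq_of_isSink_of_mem_iff (h : IsPUSO φ A B) (hi : i ∈ B \ A) (hV : IsSink φ A B V)
    (hW : IsSink φ A B W) (hVW : i ∈ V ↔ i ∈ W) : V = W := by
  obtain ⟨S, T, hiS, hiT, sink_iff, -⟩ :=
    exists_isSink_iff_of_facets hi (h.hasUniqueSink_lowerFacet hi) (h.hasUniqueSink_upperFacet hi)
  grind

lemma isSink_antipode (h : IsPUSO φ A B) (hV : IsSink φ A B V) :
    IsSink φ A B (A ∪ B \ V) := by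
  obtain ⟨W, hW, hWV⟩ : ∃ W, IsSink φ A B W ∧ W ≠ V := by
    by_contra! hunique
    exact h.2.1 ⟨V, hV, hunique⟩
  have opposite : ∀ i ∈ B \ A, ¬(i ∈ W ↔ i ∈ V) :=
    fun i hi hWV' ↦ hWV (h.eq_of_isSink_of_mem_iff hi hW hV hWV')
  have hW_eq : W = A ∪ B \ V := by
    obtain ⟨hAW, hWB, -⟩ := hW
    ext x
    grind
  exact hW_eq ▸ hW

lemma apply_antipode_inter (h : IsPUSO φ A B) (hAV : A ⊆ V) (hVB : V ⊆ B) :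
    φ (A ∪ B \ V) ∩ (B \ A) = φ V ∩ (B \ A) :=
  (isSink_reorient_iff.1 <|
    (h.reorient (φ V)).isSink_antipode (isSink_reorient_iff.2 ⟨hAV, hVB, rfl⟩)).2.2

end IsPUSO

end Outmap

section Extension

variable {φ ψ : Finset ℕ → Finset ℕ} {V : Finset ℕ} {n : ℕ}

lemma phiExt_inter_facet (i : ℕ) (hV : V ⊆ Icc 1 n) (hψV : ψ V ⊆ Icc 1 n) :
    phiExt (n + 1) i ψ V ∩ Icc 1 n = ψ V := by
  have hnV : n + 1 ∉ V := fun hmem ↦ by simpa using hV hmem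
  rw [phiExt, if_neg hnV, phiExtAux]
  split_ifs
  · exact Finset.inter_eq_left.2 hψV
  · simp [Finset.inter_eq_left.2 hψV]

lemma phiExtAux_eq_inter {i : ℕ} (hψV : φ V ∩ Icc 1 n = ψ V)
    (hparity : #(φ V ∩ Icc 1 (n + 1)) % 2 = i % 2) :
    phiExtAux (n + 1) i ψ V = φ V ∩ Icc 1 (n + 1) := by
  have hIcc : Icc 1 (n + 1) = insert (n + 1) (Icc 1 n) :=
    (Finset.insert_Icc_right_eq_Icc_add_one (by omega)).symm
  have hnψ : n + 1 ∉ ψ V := by simp [← hψV]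
  rw [phiExtAux]
  by_cases hmem : n + 1 ∈ φ V
  · rw [hIcc, Finset.inter_insert_of_mem hmem, hψV] at hparity ⊢
    rw [Finset.card_insert_of_notMem hnψ] at hparity
    rw [if_neg (by omega), Finset.union_singleton]
  · rw [hIcc, Finset.inter_insert_of_notMem hmem, hψV] at hparity ⊢
    rw [if_pos hparity]

/-- By `IsPUSO.even_card_inter_iff`, `hparity` says that `i` is the parity of all values of `φ`. -/
lemma IsPUSO.isPUSO_phiExt {i : ℕ} (h : IsPUSO φ ∅ (Icc 1 (n + 1)))
    (hφ : ∀ V ⊆ Icc 1 n, φ V ∩ Icc 1 n = ψ V)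
    (hparity : Even i ↔ ∃ W, IsSink φ ∅ (Icc 1 (n + 1)) W) :
    IsPUSO (phiExt (n + 1) i ψ) ∅ (Icc 1 (n + 1)) := by
  have aux_eq : ∀ W ⊆ Icc 1 n, phiExtAux (n + 1) i ψ W = φ W ∩ Icc 1 (n + 1) := by
    intro W hW
    have hWN : W ⊆ Icc 1 (n + 1) := hW.trans (Finset.Icc_subset_Icc_right n.le_succ)
    have heven := (h.even_card_inter_iff W.empty_subset hWN).trans hparity.symm
    rw [Finset.sdiff_empty, Nat.even_iff, Nat.even_iff] at heven
    exact phiExtAux_eq_inter (hφ W hW) (by omega)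
  refine h.congr fun V hV hVN ↦ ?_
  rw [Finset.sdiff_empty, phiExt]
  split_ifs with hnV
  · have antipode_eq := h.apply_antipode_inter hV hVN
    rw [Finset.empty_union, Finset.sdiff_empty] at antipode_eq
    rw [aux_eq _ (by grind), Finset.inter_right_idem, antipode_eq]
  · rw [aux_eq V (by grind), Finset.inter_right_idem]

lemma IsPUSO.isBorderUSO (h : IsPUSO φ ∅ (Icc 1 (n + 1)))
    (hφ : ∀ V ⊆ Icc 1 n, φ V ∩ Icc 1 n = ψ V) : IsBorderUSO n ψ := by
  have facet_ne : Icc 1 n ≠ Icc 1 (n + 1) := fun heq ↦ by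
    simpa using heq.symm.subset (Finset.right_mem_Icc.2 (Nat.le_add_left 1 n))
  have hfacet : IsUSO φ ∅ (Icc 1 n) :=
    h.isUSO_of_ne subset_rfl (Finset.empty_subset _)
      (Finset.Icc_subset_Icc_right n.le_succ) fun heq ↦ facet_ne heq.2
  refine ⟨hfacet.congr fun V _ hV ↦ ?_, φ, h, hφ⟩
  rw [Finset.sdiff_empty, ← hφ V hV, Finset.inter_right_idem]

lemma IsBorderUSO.isPUSO_phiExt (h : IsBorderUSO n ψ) (i : ℕ) :
    IsPUSO (phiExt (n + 1) i ψ) ∅ (Icc 1 (n + 1)) := by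
  obtain ⟨-, φ, hφ, hφψ⟩ := h
  by_cases hi : Even i ↔ ∃ W, IsSink φ ∅ (Icc 1 (n + 1)) W
  · exact hφ.isPUSO_phiExt hφψ hi
  · refine (hφ.reorient {n + 1}).isPUSO_phiExt (fun V hV ↦ ?_) ?_
    · rw [reorient_inter_of_disjoint (by simp), hφψ V hV]
    · rw [hφ.exists_isSink_reorient_singleton_iff (by simp)]
      tauto

end Extension

theorem border_iff_extensions_puso_general (n i : ℕ) (ψ : Finset ℕ → Finset ℕ)
    (hψr : ∀ V : Finset ℕ, V ⊆ Finset.Icc 1 n → ψ V ⊆ Finset.Icc 1 n) :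
    IsBorderUSO n ψ ↔ IsPUSO (phiExt (n + 1) i ψ) ∅ (Finset.Icc 1 (n + 1)) :=
  ⟨fun h ↦ h.isPUSO_phiExt i,
    fun h ↦ h.isBorderUSO fun V hV ↦ phiExt_inter_facet i hV (hψr V hV)⟩

/-- For a USO `ψ` of the facet `[∅,{1,…,n-1}]`, being a border USO is
equivalent to the canonical extension `φ_0` being a PUSO of the full face of
the standard `n`-cube, and also equivalent to `φ_1` being such a PUSO. -/
theorem border_iff_extensions_puso (n : ℕ) (hn : 2 ≤ n)
    (ψ : Finset ℕ → Finset ℕ)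
    (hψr : ∀ V : Finset ℕ, V ⊆ Finset.Icc 1 (n - 1) → ψ V ⊆ Finset.Icc 1 (n - 1))
    (hψ : IsUSO ψ ∅ (Finset.Icc 1 (n - 1))) :
    (IsBorderUSO (n - 1) ψ ↔ IsPUSO (phiExt n 0 ψ) ∅ (Finset.Icc 1 n)) ∧
    (IsBorderUSO (n - 1) ψ ↔ IsPUSO (phiExt n 1 ψ) ∅ (Finset.Icc 1 n)) := by
  obtain ⟨m, rfl⟩ : ∃ m, n = m + 1 := ⟨n - 1, by omega⟩
  exact ⟨border_iff_extensions_puso_general m 0 ψ hψr, border_iff_extensions_puso_general m 1 ψ hψr⟩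
end

section
/- Let φ be a bijective outmap that is a USO of the full face [∅,{1,…,n}] of the standard n-cube. Then φ⁻¹ is a border USO of the full face [∅,{1,…,n}] if and only if the following condition holds for all pairs of distinct vertices U, V ⊆ {1,…,n}: if U ∆ V ⊆ φ(U) ∆ φ(V), then |U ∆ V| is odd. -/
/-!
Fix a cube and count, for each set `T` of directions, the vertices whose outmap is `T`. If `i ∉ T`,
the vertices with outmap `T` or `T ∪ {i}` are those whose outmap within one of the two facets
orthogonal to `i` is `T`. In a USO this shows by induction that every `T` occurs exactly once, which
gives the Szabó–Welzl criterion: distinct vertices `U`, `V` satisfy `(U ∆ V) ∩ (φ U ∆ φ V) ≠ ∅`. As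
this is symmetric in vertices and outmap values, the inverse of a bijective USO is again a USO.

In a PUSO, whose facets are USOs, the counts of `T` and `T ∪ {i}` add up to `2`; so the count of `T`
is `1 + (-1) ^ |T| * ε`, where `ε ≠ 0` because `∅` does not occur exactly once. Hence all occurring
outmap values have the same parity and occur at least twice. By the criterion, distinct vertices
with equal outmaps lie in no common proper face, so the second occurrence is at the antipode.

A PUSO of the `(n+1)`-cube is therefore determined, up to the choice of parity, by its restriction
`ψ` to a facet. Applying the criterion to `U` and the antipode of `V`, such an extension of `ψ`
exists iff, for distinct vertices, `ψ U ∆ ψ V ⊆ U ∆ V` implies that `|ψ U ∆ ψ V|` is odd. For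
`ψ = φ⁻¹`, substitute `φ U` and `φ V` for `U` and `V`.
-/

open Finset
open scoped symmDiff

section SetIdentities

variable {α : Type*} [DecidableEq α] {s t u : Finset α}

theorem even_card_symmDiff_iff : Even #(s ∆ t) ↔ (Even #s ↔ Even #t) := by
  have hcard : #(s ∆ t) = #(s \ t) + #(t \ s) := card_union_of_disjoint disjoint_sdiff_sdiff
  have hs := card_sdiff_add_card_inter s t
  have ht := card_sdiff_add_card_inter t s
  rw [inter_comm t s] at ht
  grind

theorem symmDiff_sdiff_of_subset (hs : s ⊆ u) (ht : t ⊆ u) : s ∆ (u \ t) = u \ (s ∆ t) := by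
  grind [mem_symmDiff]

theorem sdiff_symmDiff_sdiff_of_subset (hs : s ⊆ u) (ht : t ⊆ u) :
    (u \ s) ∆ (u \ t) = s ∆ t := by
  grind [mem_symmDiff]

theorem inter_eq_empty_and_union_eq_iff (hs : s ⊆ u) :
    s ∩ t = ∅ ∧ s ∪ t = u ↔ t = u \ s := by
  simp only [Finset.ext_iff, mem_inter, mem_union, mem_sdiff, notMem_empty]
  grind

theorem inter_eq_inter_of_subset {v : Finset α} (hvu : v ⊆ u) (h : s ∩ u = t ∩ u) :
    s ∩ v = t ∩ v := by
  rw [← inter_eq_right.2 hvu, ← inter_assoc, h, inter_assoc]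

theorem erase_eq_iff_eq_or_eq_insert {a : α} (ha : a ∉ t) :
    s.erase a = t ↔ s = t ∨ s = insert a t := by
  by_cases has : a ∈ s
  · rw [erase_eq_iff_eq_insert has ha, or_iff_right (ne_of_mem_of_not_mem' has ha)]
  · rw [erase_eq_of_notMem has,
      or_iff_left (ne_of_mem_of_not_mem' (mem_insert_self a t) has).symm]

theorem inter_insert_subset_iff_of_even {a : α} (ha : a ∉ t) (hu : u ⊆ t)
    (heven : Even #(s ∩ insert a t)) :
    s ∩ insert a t ⊆ u ↔ s ∩ t ⊆ u ∧ Even #(s ∩ t) := by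
  by_cases has : a ∈ s
  · have hcard : #(s ∩ insert a t) = #(s ∩ t) + 1 := by
      rw [inter_insert_of_mem has, card_insert_of_notMem (by simp [ha])]
    grind
  · rw [inter_insert_of_notMem has] at heven ⊢
    exact (and_iff_left heven).symm

end SetIdentities

variable {φ ψ : Finset ℕ → Finset ℕ} {A B A' B' M N T U V : Finset ℕ} {m : ℕ}

/-! ### Outmap values of USOs -/

/-- The vertices of the face `[A, B]` whose outmap within the carrier `B \ A` is exactly `T`. -/
def outmapFiber (φ : Finset ℕ → Finset ℕ) (A B T : Finset ℕ) : Finset (Finset ℕ) :=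
  {V ∈ Icc A B | φ V ∩ (B \ A) = T}

theorem mem_outmapFiber : V ∈ outmapFiber φ A B T ↔ (A ⊆ V ∧ V ⊆ B) ∧ φ V ∩ (B \ A) = T := by
  simp [outmapFiber]

theorem hasUniqueSink_iff_card_outmapFiber :
    HasUniqueSink φ A B ↔ #(outmapFiber φ A B ∅) = 1 := by
  simp only [card_eq_one, singleton_iff_unique_mem, HasUniqueSink, IsSink, mem_outmapFiber,
    and_assoc]

theorem card_outmapFiber_add_card_outmapFiber_insert {i : ℕ} (hiT : i ∉ T) :
    #(outmapFiber φ A B T) + #(outmapFiber φ A B (insert i T)) =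
      #(outmapFiber φ A (B.erase i) T) + #(outmapFiber φ (insert i A) B T) := by
  rw [← card_union_of_disjoint, ← card_union_of_disjoint]
  · have hlower : B.erase i \ A = (B \ A).erase i := (erase_sdiff_comm B A i)
    have hupper : B \ insert i A = (B \ A).erase i := sdiff_insert B A i
    congr 1
    ext V
    simp only [mem_union, mem_outmapFiber, hlower, hupper, inter_erase,
      erase_eq_iff_eq_or_eq_insert hiT, subset_erase, insert_subset_iff]
    tauto
  · simp only [disjoint_left, mem_outmapFiber]
    grind
  · simp only [disjoint_left, mem_outmapFiber]
    grind

theorem IsUSO.mono (h : IsUSO φ A B) (hA : A ⊆ A') (hAB : A' ⊆ B') (hB : B' ⊆ B) :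
    IsUSO φ A' B' :=
  ⟨hAB, fun _ _ hA' hAB' hB' => h.2 _ _ (hA.trans hA') hAB' (hB'.trans hB)⟩

theorem IsUSO.card_outmapFiber (h : IsUSO φ A B) (hT : T ⊆ B \ A) :
    #(outmapFiber φ A B T) = 1 := by
  induction T using Finset.induction_on generalizing A B with
  | empty => exact hasUniqueSink_iff_card_outmapFiber.1 (h.2 A B subset_rfl h.1 subset_rfl)
  | insert i T hiT ih =>
    have hi : i ∈ B \ A := hT (mem_insert_self i T)
    have hface : #(outmapFiber φ A B T) = 1 := ih h (by grind)
    have hlower : #(outmapFiber φ A (B.erase i) T) = 1 :=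
      ih (h.mono subset_rfl (by grind [h.1]) (erase_subset i B)) (by grind)
    have hupper : #(outmapFiber φ (insert i A) B T) = 1 :=
      ih (h.mono (subset_insert i A) (by grind [h.1]) subset_rfl) (by grind)
    have := card_outmapFiber_add_card_outmapFiber_insert (φ := φ) (A := A) (B := B) hiT
    omega

/-! ### The Szabó–Welzl criterion -/

/-- The Szabó–Welzl condition for a pair of vertices: on some direction in which `U` and `V`
differ, their outmaps differ as well. -/
def Separated (φ : Finset ℕ → Finset ℕ) (U V : Finset ℕ) : Prop :=
  ((U ∆ V) ∩ (φ U ∆ φ V)).Nonempty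

theorem not_separated_iff : ¬ Separated φ U V ↔ φ U ∩ (U ∆ V) = φ V ∩ (U ∆ V) := by
  simp only [Separated, not_nonempty_iff_eq_empty, Finset.ext_iff, mem_inter, mem_symmDiff,
    notMem_empty]
  grind

theorem Separated.symm (h : Separated φ U V) : Separated φ V U := by
  rwa [Separated, symmDiff_comm V U, symmDiff_comm (φ V)]

theorem separated_congr (hUV : U ∆ V ⊆ T) (hU : φ U ∩ T = ψ U ∩ T) (hV : φ V ∩ T = ψ V ∩ T) :
    Separated φ U V ↔ Separated ψ U V := by
  have hrestrict {W : Finset ℕ} (hW : φ W ∩ T = ψ W ∩ T) :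
      φ W ∩ (U ∆ V) = ψ W ∩ (U ∆ V) := inter_eq_inter_of_subset hUV hW
  rw [← not_iff_not, not_separated_iff, not_separated_iff, hrestrict hU, hrestrict hV]

theorem IsUSO.separated_of_span (h : IsUSO φ (U ∩ V) (U ∪ V)) (hne : U ≠ V) :
    Separated φ U V := by
  by_contra hsep
  have hcarrier : (U ∪ V) \ (U ∩ V) = U ∆ V := (symmDiff_eq_sup_sdiff_inf U V).symm
  have hcard : #(outmapFiber φ (U ∩ V) (U ∪ V) (φ U ∩ (U ∆ V))) = 1 :=
    h.card_outmapFiber (hcarrier ▸ inter_subset_right)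
  refine hne (card_le_one.1 hcard.le U ?_ V ?_)
  · exact mem_outmapFiber.2 ⟨⟨inter_subset_left, subset_union_left⟩, by rw [hcarrier]⟩
  · exact mem_outmapFiber.2 ⟨⟨inter_subset_right, subset_union_right⟩, by
      rw [hcarrier, not_separated_iff.1 hsep]⟩

theorem injOn_inter_carrier (h : (Set.Icc A B).Pairwise (Separated φ)) :
    Set.InjOn (fun V => φ V ∩ (B \ A)) (Set.Icc A B) := by
  intro U hU V hV heq
  by_contra hne
  refine not_separated_iff.2 ?_ (h hU hV hne)
  have hcarrier : U ∆ V ⊆ B \ A := by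
    have : A ⊆ U ∧ U ⊆ B := hU
    have : A ⊆ V ∧ V ⊆ B := hV
    grind [mem_symmDiff]
  exact inter_eq_inter_of_subset hcarrier heq

theorem hasUniqueSink_of_pairwise_separated (hAB : A ⊆ B)
    (h : (Set.Icc A B).Pairwise (Separated φ)) : HasUniqueSink φ A B := by
  have hinj : Set.InjOn (fun V => φ V ∩ (B \ A)) (Icc A B : Finset (Finset ℕ)) := by
    simpa only [coe_Icc] using injOn_inter_carrier h
  have hcard : #(B \ A).powerset ≤ #(Icc A B) := by
    rw [card_powerset, card_Icc_finset hAB, card_sdiff_of_subset hAB]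
  have hsurj := surjOn_of_injOn_of_card_le _ (by simp [Set.MapsTo]) hinj hcard
  obtain ⟨V, hV, hsink⟩ := hsurj (mem_coe.2 (empty_mem_powerset (B \ A)))
  have hVface := mem_Icc.1 hV
  exact ⟨V, ⟨hVface.1, hVface.2, hsink⟩, fun W hW =>
    hinj (mem_Icc.2 ⟨hW.1, hW.2.1⟩) hV (hW.2.2.trans hsink.symm)⟩

theorem isUSO_iff_pairwise_separated (hAB : A ⊆ B) :
    IsUSO φ A B ↔ (Set.Icc A B).Pairwise (Separated φ) := by
  constructor
  · intro h U hU V hV hne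
    exact (h.mono (subset_inter hU.1 hV.1) (inter_subset_left.trans subset_union_left)
      (union_subset hU.2 hV.2)).separated_of_span hne
  · exact fun h => ⟨hAB, fun A' B' hA hAB' hB =>
      hasUniqueSink_of_pairwise_separated hAB' (h.mono (Set.Icc_subset_Icc hA hB))⟩

theorem isUSO_empty_iff :
    IsUSO φ ∅ M ↔ ∀ U V, U ⊆ M → V ⊆ M → U ≠ V → Separated φ U V := by
  rw [isUSO_iff_pairwise_separated (empty_subset M)]
  exact ⟨fun h U V hU hV => h ⟨empty_subset U, hU⟩ ⟨empty_subset V, hV⟩,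
    fun h U hU V hV => h U V hU.2 hV.2⟩

theorem isUSO_empty_congr (h : ∀ V ⊆ M, φ V ∩ M = ψ V ∩ M) :
    IsUSO φ ∅ M ↔ IsUSO ψ ∅ M := by
  simp only [isUSO_empty_iff]
  refine forall₄_congr fun U V hU hV => imp_congr_right fun _ => ?_
  exact separated_congr (symmDiff_subset_union.trans (union_subset hU hV)) (h U hU) (h V hV)

theorem IsUSO.of_rightInverse (h : IsUSO φ ∅ M) (hψ : ∀ V ⊆ M, ψ V ⊆ M)
    (hright : ∀ V ⊆ M, φ (ψ V) = V) : IsUSO ψ ∅ M := by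
  refine isUSO_empty_iff.2 fun U V hU hV hne => ?_
  have hψne : ψ U ≠ ψ V := fun heq => hne (by rw [← hright U hU, heq, hright V hV])
  have hsep := isUSO_empty_iff.1 h _ _ (hψ U hU) (hψ V hV) hψne
  rwa [Separated, hright U hU, hright V hV, inter_comm] at hsep

/-! ### Parity and antipodal symmetry of PUSOs -/

theorem IsPUSO.isUSO (h : IsPUSO φ A B) (hA : A ⊆ A') (hAB : A' ⊆ B') (hB : B' ⊆ B)
    (hproper : ¬ (A' = A ∧ B' = B)) : IsUSO φ A' B' := by
  refine ⟨hAB, fun A'' B'' hA' hAB' hB' => ?_⟩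
  refine h.2.2 A'' B'' (hA.trans hA') hAB' (hB'.trans hB) fun ⟨hA'', hB''⟩ => hproper ?_
  subst hA'' hB''
  exact ⟨hA'.antisymm hA, hB.antisymm hB'⟩

theorem IsPUSO.separated (h : IsPUSO φ A B) (hU : U ∈ Set.Icc A B) (hV : V ∈ Set.Icc A B)
    (hne : U ≠ V) (hspan : ¬ (U ∩ V = A ∧ U ∪ V = B)) : Separated φ U V :=
  (h.isUSO (subset_inter hU.1 hV.1) (inter_subset_left.trans subset_union_left)
    (union_subset hU.2 hV.2) hspan).separated_of_span hne

theorem IsPUSO.card_outmapFiber_add_insert (h : IsPUSO φ A B) {i : ℕ} (hiT : i ∉ T)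
    (hT : insert i T ⊆ B \ A) :
    #(outmapFiber φ A B T) + #(outmapFiber φ A B (insert i T)) = 2 := by
  have hi : i ∈ B \ A := hT (mem_insert_self i T)
  have hlower : #(outmapFiber φ A (B.erase i) T) = 1 :=
    (h.isUSO subset_rfl (by grind [h.1]) (erase_subset i B) (by grind)).card_outmapFiber
      (by grind [insert_subset_iff])
  have hupper : #(outmapFiber φ (insert i A) B T) = 1 :=
    (h.isUSO (subset_insert i A) (by grind [h.1]) subset_rfl (by grind)).card_outmapFiber
      (by grind [insert_subset_iff])
  rw [card_outmapFiber_add_card_outmapFiber_insert hiT, hlower, hupper]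

theorem IsPUSO.card_outmapFiber_sub_one (h : IsPUSO φ A B) (hT : T ⊆ B \ A) :
    (#(outmapFiber φ A B T) - 1 : ℤ) = (-1) ^ #T * (#(outmapFiber φ A B ∅) - 1) := by
  induction T using Finset.induction_on with
  | empty => simp
  | insert i T hiT ih =>
    have hsum : (#(outmapFiber φ A B T) + #(outmapFiber φ A B (insert i T)) : ℤ) = 2 :=
      mod_cast h.card_outmapFiber_add_insert hiT hT
    rw [card_insert_of_notMem hiT, pow_succ]
    linear_combination hsum - ih ((subset_insert i T).trans hT)

theorem IsPUSO.card_outmapFiber_ne_one (h : IsPUSO φ A B) (hT : T ⊆ B \ A) :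
    #(outmapFiber φ A B T) ≠ 1 := by
  have hsink : #(outmapFiber φ A B ∅) ≠ 1 := hasUniqueSink_iff_card_outmapFiber.not.1 h.2.1
  have hcard := h.card_outmapFiber_sub_one hT
  rcases neg_one_pow_eq_or ℤ #T with hsign | hsign <;> rw [hsign] at hcard <;> omega

theorem IsPUSO.one_lt_card_outmapFiber (h : IsPUSO φ A B) (hV : V ∈ Set.Icc A B) :
    1 < #(outmapFiber φ A B (φ V ∩ (B \ A))) :=
  lt_of_le_of_ne (card_pos.2 ⟨V, mem_outmapFiber.2 ⟨hV, rfl⟩⟩)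
    (h.card_outmapFiber_ne_one inter_subset_right).symm

theorem IsPUSO.even_card_symmDiff (h : IsPUSO φ A B) (hU : U ∈ Set.Icc A B)
    (hV : V ∈ Set.Icc A B) : Even #((φ U ∆ φ V) ∩ (B \ A)) := by
  have hdistrib : (φ U ∆ φ V) ∩ (B \ A) = (φ U ∩ (B \ A)) ∆ (φ V ∩ (B \ A)) :=
    inf_symmDiff_distrib_right (φ U) (φ V) (B \ A)
  have hparity {W : Finset ℕ} (hW : W ∈ Set.Icc A B) :
      Even #(φ W ∩ (B \ A)) ↔ 1 < #(outmapFiber φ A B ∅) := by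
    have hlt := h.one_lt_card_outmapFiber hW
    have hcard := h.card_outmapFiber_sub_one (T := φ W ∩ (B \ A)) inter_subset_right
    rcases Nat.even_or_odd #(φ W ∩ (B \ A)) with heven | hodd
    · rw [heven.neg_one_pow] at hcard
      exact iff_of_true heven (by omega)
    · rw [hodd.neg_one_pow] at hcard
      exact iff_of_false (Nat.not_even_iff_odd.2 hodd) (by omega)
  rw [hdistrib, even_card_symmDiff_iff, hparity hU, hparity hV]

/-- On the cube `[∅, M]`, antipodal vertices have the same outmap. Outmap values are compared
within `M` only, since an outmap is unconstrained outside the carrier. -/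
def AntipodallySymmetric (φ : Finset ℕ → Finset ℕ) (M : Finset ℕ) : Prop :=
  ∀ V ⊆ M, φ (M \ V) ∩ M = φ V ∩ M

theorem IsPUSO.separated_of_ne_antipode (h : IsPUSO φ ∅ M) (hU : U ⊆ M) (hV : V ⊆ M)
    (hne : U ≠ V) (hanti : V ≠ M \ U) : Separated φ U V :=
  h.separated ⟨empty_subset U, hU⟩ ⟨empty_subset V, hV⟩ hne
    fun hspan => hanti ((inter_eq_empty_and_union_eq_iff hU).1 hspan)

theorem IsPUSO.antipodallySymmetric (h : IsPUSO φ ∅ M) : AntipodallySymmetric φ M := by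
  intro V hV
  obtain ⟨W, hW, hne⟩ :=
    exists_mem_ne (h.one_lt_card_outmapFiber ⟨empty_subset V, hV⟩) V
  rw [mem_outmapFiber, sdiff_empty] at hW
  obtain ⟨⟨-, hWM⟩, hout⟩ := hW
  have hnotsep : ¬ Separated φ V W := not_separated_iff.2 <|
    inter_eq_inter_of_subset (symmDiff_subset_union.trans (union_subset hV hWM)) hout.symm
  have hanti : W = M \ V := by
    by_contra hanti
    exact hnotsep (h.separated_of_ne_antipode hV hWM hne.symm hanti)
  rw [← hanti, hout]

namespace AntipodallySymmetric

theorem separated_sdiff_right (hφ : AntipodallySymmetric φ M) (hU : U ⊆ M) (hV : V ⊆ M) :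
    Separated φ U (M \ V) ↔ ¬ (φ U ∆ φ V) ∩ M ⊆ U ∆ V := by
  have hout := hφ V hV
  rw [Separated, symmDiff_sdiff_of_subset hU hV, not_subset]
  simp only [Finset.Nonempty, Finset.ext_iff, mem_inter, mem_sdiff, mem_symmDiff] at hout ⊢
  grind

theorem separated_sdiff_sdiff (hφ : AntipodallySymmetric φ M) (hU : U ⊆ M) (hV : V ⊆ M) :
    Separated φ (M \ U) (M \ V) ↔ Separated φ U V := by
  have houtU := hφ U hU
  have houtV := hφ V hV
  rw [Separated, Separated, sdiff_symmDiff_sdiff_of_subset hU hV]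
  simp only [Finset.Nonempty, Finset.ext_iff, mem_inter, mem_symmDiff] at houtU houtV ⊢
  grind

theorem not_hasUniqueSink (hφ : AntipodallySymmetric φ M) (hM : M.Nonempty) :
    ¬ HasUniqueSink φ ∅ M := by
  rintro ⟨V, ⟨-, hV, hsink⟩, huniq⟩
  rw [sdiff_empty] at hsink
  have hanti : M \ V = V := huniq (M \ V) ⟨empty_subset _, sdiff_subset, by
    rw [sdiff_empty, hφ V hV, hsink]⟩
  obtain ⟨x, hx⟩ := hM
  grind

theorem isPUSO (hφ : AntipodallySymmetric φ M) (hM : M.Nonempty)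
    (hsep : ∀ U V, U ⊆ M → V ⊆ M → U ≠ V → V ≠ M \ U → Separated φ U V) :
    IsPUSO φ ∅ M := by
  refine ⟨empty_subset M, hφ.not_hasUniqueSink hM, fun A B _ hAB hB hproper => ?_⟩
  refine hasUniqueSink_of_pairwise_separated hAB fun U hU V hV hne => ?_
  refine hsep U V (hU.2.trans hB) (hV.2.trans hB) hne fun hanti => hproper ?_
  obtain ⟨hinter, hunion⟩ := (inter_eq_empty_and_union_eq_iff (hU.2.trans hB)).2 hanti
  exact ⟨subset_empty.1 (hinter ▸ subset_inter hU.1 hV.1),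
    hB.antisymm (hunion ▸ union_subset hU.2 hV.2)⟩

theorem isPUSO_insert (hφ : AntipodallySymmetric φ (insert m N))
    (hsep : ∀ U V, U ⊆ N → V ⊆ N → U ≠ V → Separated φ U V)
    (hsepAnti : ∀ U V, U ⊆ N → V ⊆ N → U ≠ V → Separated φ U (insert m N \ V)) :
    IsPUSO φ ∅ (insert m N) := by
  have hrep {V : Finset ℕ} (hV : V ⊆ insert m N) :
      V ⊆ N ∨ ∃ W ⊆ N, V = insert m N \ W := by
    by_cases hmV : m ∈ V
    · exact .inr ⟨insert m N \ V, by grind, (Finset.sdiff_sdiff_eq_self hV).symm⟩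
    · exact .inl ((subset_insert_iff_of_notMem hmV).1 hV)
  have hsub {W : Finset ℕ} (hW : W ⊆ N) : W ⊆ insert m N := hW.trans (subset_insert m N)
  refine hφ.isPUSO (insert_nonempty m N) fun U V hU hV hne hanti => ?_
  obtain hUN | ⟨U', hU', rfl⟩ := hrep hU <;> obtain hVN | ⟨V', hV', rfl⟩ := hrep hV
  · exact hsep U V hUN hVN hne
  · exact hsepAnti U V' hUN hV' fun heq => hanti (heq ▸ rfl)
  · refine (hsepAnti V U' hVN hU' fun heq => hanti ?_).symm
    rw [heq, Finset.sdiff_sdiff_eq_self (hsub hU')]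
  · exact (hφ.separated_sdiff_sdiff (hsub hU') (hsub hV')).2
      (hsep U' V' hU' hV' fun heq => hne (heq ▸ rfl))

theorem isPUSO_insert_iff (hφ : AntipodallySymmetric φ (insert m N)) (hm : m ∉ N)
    (heven : ∀ U ⊆ N, ∀ V ⊆ N, Even #((φ U ∆ φ V) ∩ insert m N)) :
    IsPUSO φ ∅ (insert m N) ↔ IsUSO φ ∅ N ∧ ∀ U V, U ⊆ N → V ⊆ N → U ≠ V →
      (φ U ∆ φ V) ∩ N ⊆ U ∆ V → Odd #((φ U ∆ φ V) ∩ N) := by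
  have hsub {W : Finset ℕ} (hW : W ⊆ N) : W ⊆ insert m N := hW.trans (subset_insert m N)
  have hodd {U V : Finset ℕ} (hU : U ⊆ N) (hV : V ⊆ N) : Separated φ U (insert m N \ V) ↔
      ((φ U ∆ φ V) ∩ N ⊆ U ∆ V → Odd #((φ U ∆ φ V) ∩ N)) := by
    have hUV : U ∆ V ⊆ N := symmDiff_subset_union.trans (union_subset hU hV)
    rw [hφ.separated_sdiff_right (hsub hU) (hsub hV),
      inter_insert_subset_iff_of_even hm hUV (heven U hU V hV), not_and, Nat.not_even_iff_odd]
  constructor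
  · intro h
    refine ⟨h.isUSO subset_rfl (empty_subset N) (subset_insert m N) (by grind),
      fun U V hU hV hne => (hodd hU hV).1 ?_⟩
    refine h.separated_of_ne_antipode (hsub hU) sdiff_subset (by grind) fun heq => hne ?_
    rw [← Finset.sdiff_sdiff_eq_self (hsub hU), ← heq, Finset.sdiff_sdiff_eq_self (hsub hV)]
  · rintro ⟨hUSO, hcond⟩
    exact hφ.isPUSO_insert (isUSO_empty_iff.1 hUSO)
      fun U V hU hV hne => (hodd hU hV).2 (hcond U V hU hV hne)

end AntipodallySymmetric

/-! ### Border USOs -/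

/-- `S` with the element `m` (assumed not in `S`) added if needed to make its size even. -/
def evenCompletion (m : ℕ) (S : Finset ℕ) : Finset ℕ :=
  if Even #S then S else insert m S

theorem even_card_evenCompletion {S : Finset ℕ} (hm : m ∉ S) : Even #(evenCompletion m S) := by
  unfold evenCompletion
  split_ifs with hS
  · exact hS
  · rwa [card_insert_of_notMem hm, Nat.even_add_one]

theorem evenCompletion_subset {S : Finset ℕ} (hS : S ⊆ N) :
    evenCompletion m S ⊆ insert m N := by
  unfold evenCompletion
  split_ifs
  · exact hS.trans (subset_insert m N)
  · exact insert_subset_insert m hS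

theorem evenCompletion_inter {S : Finset ℕ} (hm : m ∉ N) (hS : S ⊆ N) :
    evenCompletion m S ∩ N = S := by
  unfold evenCompletion
  split_ifs
  · exact inter_eq_left.2 hS
  · rw [insert_inter_of_notMem hm, inter_eq_left.2 hS]

/-- The antipodally symmetric outmap on the cube `[∅, insert m N]` that extends `ψ` on the facet
`[∅, N]` and has only values of even size; the antipode of `V ∋ m` is `N \ V`. -/
def evenExtension (N : Finset ℕ) (m : ℕ) (ψ : Finset ℕ → Finset ℕ) (V : Finset ℕ) : Finset ℕ :=
  evenCompletion m (ψ (if m ∈ V then N \ V else V))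

theorem evenExtension_of_subset (hm : m ∉ N) (hV : V ⊆ N) :
    evenExtension N m ψ V = evenCompletion m (ψ V) := by
  rw [evenExtension, if_neg (notMem_mono hV hm)]

theorem antipodallySymmetric_evenExtension (hm : m ∉ N) :
    AntipodallySymmetric (evenExtension N m ψ) (insert m N) := by
  intro V hV
  unfold evenExtension
  by_cases hmV : m ∈ V
  · have hanti : insert m N \ V = N \ V := insert_sdiff_of_mem N hmV
    rw [if_pos hmV, hanti, if_neg (by simp [hm])]
  · have hanti : N \ (insert m N \ V) = V := by grind
    rw [if_neg hmV, if_pos (by simp [hmV]), hanti]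

theorem even_card_symmDiff_evenExtension (hm : m ∉ N) (hψ : ∀ V ⊆ N, ψ V ⊆ N)
    (hU : U ⊆ N) (hV : V ⊆ N) :
    Even #((evenExtension N m ψ U ∆ evenExtension N m ψ V) ∩ insert m N) := by
  have heven {W : Finset ℕ} (hW : W ⊆ N) : Even #(evenCompletion m (ψ W)) :=
    even_card_evenCompletion (notMem_mono (hψ W hW) hm)
  rw [evenExtension_of_subset hm hU, evenExtension_of_subset hm hV, inter_eq_left.2]
  · exact even_card_symmDiff_iff.2 (iff_of_true (heven hU) (heven hV))
  · exact symmDiff_subset_union.trans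
      (union_subset (evenCompletion_subset (hψ U hU)) (evenCompletion_subset (hψ V hV)))

theorem exists_isPUSO_insert_iff (hm : m ∉ N) (hψN : ∀ V ⊆ N, ψ V ⊆ N) (hψ : IsUSO ψ ∅ N) :
    (∃ φ : Finset ℕ → Finset ℕ, IsPUSO φ ∅ (insert m N) ∧ ∀ V ⊆ N, φ V ∩ N = ψ V) ↔
      ∀ U V, U ⊆ N → V ⊆ N → U ≠ V → ψ U ∆ ψ V ⊆ U ∆ V → Odd #(ψ U ∆ ψ V) := by
  have hrestrict {φ : Finset ℕ → Finset ℕ} (hext : ∀ V ⊆ N, φ V ∩ N = ψ V) {U V : Finset ℕ}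
      (hU : U ⊆ N) (hV : V ⊆ N) : (φ U ∆ φ V) ∩ N = ψ U ∆ ψ V := by
    rw [← hext U hU, ← hext V hV]
    exact inf_symmDiff_distrib_right (φ U) (φ V) N
  constructor
  · rintro ⟨φ, h, hext⟩ U V hU hV hne
    have heven : ∀ U ⊆ N, ∀ V ⊆ N, Even #((φ U ∆ φ V) ∩ insert m N) := by
      intro U hU V hV
      have hsub := subset_insert m N
      simpa only [sdiff_empty] using h.even_card_symmDiff
        ⟨empty_subset U, hU.trans hsub⟩ ⟨empty_subset V, hV.trans hsub⟩
    have hodd := ((h.antipodallySymmetric.isPUSO_insert_iff hm heven).1 h).2 U V hU hV hne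
    rwa [hrestrict hext hU hV] at hodd
  · intro hodd
    have hext : ∀ V ⊆ N, evenExtension N m ψ V ∩ N = ψ V := fun V hV => by
      rw [evenExtension_of_subset hm hV, evenCompletion_inter hm (hψN V hV)]
    have hUSO : IsUSO (evenExtension N m ψ) ∅ N := (isUSO_empty_congr fun V hV => by
      rw [hext V hV, inter_eq_left.2 (hψN V hV)]).2 hψ
    refine ⟨evenExtension N m ψ, ?_, hext⟩
    refine ((antipodallySymmetric_evenExtension hm).isPUSO_insert_iff hm fun U hU V hV =>
      even_card_symmDiff_evenExtension hm hψN hU hV).2 ⟨hUSO, fun U V hU hV hne => ?_⟩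
    rw [hrestrict hext hU hV]
    exact hodd U V hU hV hne

theorem isBorderUSO_iff {n : ℕ} (hmaps : ∀ V ⊆ Icc 1 n, ψ V ⊆ Icc 1 n)
    (hψ : IsUSO ψ ∅ (Icc 1 n)) :
    IsBorderUSO n ψ ↔ ∀ U V, U ⊆ Icc 1 n → V ⊆ Icc 1 n → U ≠ V →
      ψ U ∆ ψ V ⊆ U ∆ V → Odd #(ψ U ∆ ψ V) := by
  have hIcc : Icc 1 (n + 1) = insert (n + 1) (Icc 1 n) :=
    (insert_Icc_right_eq_Icc_add_one (by omega)).symm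
  rw [IsBorderUSO, and_iff_right hψ, hIcc]
  exact exists_isPUSO_insert_iff (by simp) hmaps hψ

/-- Odd USO characterization: for a bijective USO `φ` of the full face of the
standard `n`-cube (with two-sided inverse `φinv`), the inverse is a border USO
iff for all distinct vertices `U, V`, `U ∆ V ⊆ φ U ∆ φ V` implies that
`|U ∆ V|` is odd. -/
theorem odd_uso_characterization (n : ℕ) (φ φinv : Finset ℕ → Finset ℕ)
    (hmap : ∀ V : Finset ℕ, V ⊆ Finset.Icc 1 n → φ V ⊆ Finset.Icc 1 n)
    (hmapinv : ∀ V : Finset ℕ, V ⊆ Finset.Icc 1 n → φinv V ⊆ Finset.Icc 1 n)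
    (hleft : ∀ V : Finset ℕ, V ⊆ Finset.Icc 1 n → φinv (φ V) = V)
    (hright : ∀ V : Finset ℕ, V ⊆ Finset.Icc 1 n → φ (φinv V) = V)
    (hφ : IsUSO φ ∅ (Finset.Icc 1 n)) :
    IsBorderUSO n φinv ↔
      ∀ U V : Finset ℕ, U ⊆ Finset.Icc 1 n → V ⊆ Finset.Icc 1 n → U ≠ V →
        U ∆ V ⊆ φ U ∆ φ V → Odd (U ∆ V).card := by
  have hinv : IsUSO φinv ∅ (Finset.Icc 1 n) := hφ.of_rightInverse hmapinv hright
  rw [isBorderUSO_iff hmapinv hinv]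
  constructor
  · intro h U V hU hV hne
    have hφne : φ U ≠ φ V := fun heq => hne (by rw [← hleft U hU, heq, hleft V hV])
    simpa only [hleft U hU, hleft V hV] using h (φ U) (φ V) (hmap U hU) (hmap V hV) hφne
  · intro h U V hU hV hne
    have hinvne : φinv U ≠ φinv V := fun heq => hne (by rw [← hright U hU, heq, hright V hV])
    simpa only [hright U hU, hright V hV] using
      h (φinv U) (φinv V) (hmapinv U hU) (hmapinv V hV) hinvne
end
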